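/- arXiv:1805.03261 — 4 statements merged into one kernel-verified Lean document; each statement's English description precedes it below -/
import Mathlib

section
/- Let I be a nonempty open real interval, let c, k₁ ∈ ℝ, and let f : ℝ → ℝ be three times continuously differentiable on I. If f satisfies on I the two equations −4k₁²·f·f' + f·f''' + f'·f'' = 0 and (c − k₁²)·f² + 3·f·f'' + 2·(f')² = 0, then f'(s)·((5k₁² + c)·f(s) + 2·f''(s)) = 0 for every s ∈ I. -/
/-- For a curve with constant first curvature `k₁` and vanishing second curvature in a
space form of curvature `c`: if `f` satisfies `-4k₁²ff' + ff''' + f'f'' = 0` and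
`(c - k₁²)f² + 3ff'' + 2(f')² = 0` on a nonempty open interval `I`, then
`f' * ((5k₁² + c) f + 2 f'') = 0` on `I`. -/
theorem bi_f_harmonic_factorization
    (I : Set ℝ) (hIopen : IsOpen I) (hIne : I.Nonempty) (hIconn : I.OrdConnected)
    (c k₁ : ℝ) (f : ℝ → ℝ) (hf : ContDiffOn ℝ 3 f I)
    (h1 : ∀ s ∈ I, -4 * k₁ ^ 2 * f s * deriv f s + f s * deriv (deriv (deriv f)) s
        + deriv f s * deriv (deriv f) s = 0)
    (h2 : ∀ s ∈ I, (c - k₁ ^ 2) * f s ^ 2 + 3 * f s * deriv (deriv f) s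
        + 2 * deriv f s ^ 2 = 0) :
    ∀ s ∈ I, deriv f s * ((5 * k₁ ^ 2 + c) * f s + 2 * deriv (deriv f) s) = 0 := by
  intro s hs
  have hn : I ∈ nhds s := hIopen.mem_nhds hs
  have c1 : ContDiffOn ℝ 2 (deriv f) I := hf.deriv_of_isOpen hIopen (by norm_num)
  have c2 : ContDiffOn ℝ 1 (deriv (deriv f)) I := c1.deriv_of_isOpen hIopen (by norm_num)
  have d0 := ((hf.contDiffAt hn).differentiableAt (by norm_num)).hasDerivAt
  have d1 := ((c1.contDiffAt hn).differentiableAt (by norm_num)).hasDerivAt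
  have d2 := ((c2.contDiffAt hn).differentiableAt (by norm_num)).hasDerivAt
  have H := (((d0.fun_pow 2).const_mul (c - k₁ ^ 2)).fun_add
    ((d0.const_mul 3).fun_mul d2)).fun_add ((d1.fun_pow 2).const_mul 2)
  have Z : HasDerivAt (fun s => (c - k₁ ^ 2) * f s ^ 2 + 3 * f s * deriv (deriv f) s
        + 2 * deriv f s ^ 2) 0 s := by
    refine (hasDerivAt_const s (0 : ℝ)).congr_of_eventuallyEq ?_
    filter_upwards [hn] with x hx using h2 x hx
  have E := H.unique Z
  have E1 := h1 s hs
  norm_num at E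
  linear_combination E / 2 - 3 / 2 * E1
end

section
/- Let I be a nonempty open real interval, let k₁ > 0 be a real constant, let k₂ : ℝ → ℝ be smooth, strictly positive and nonconstant on I, let k₃ : ℝ → ℝ be a function on I, and let f : ℝ → ℝ be smooth and strictly positive on I. Then the system on I: (i) −4k₁²·f·f' + f·f''' + f'·f'' = 0, (ii) −k₁²·f² − k₂²·f² + 3·f·f'' + 2·(f')² = 0, (iii) k₂'·f + 4·k₂·f' = 0, (iv) k₂·k₃ = 0, holds if and only if there exists c > 0 with f = c·k₂^(−1/4) on I, k₃ = 0 on I, and the curvatures satisfy on I: 32·k₁²·k₂²·k₂' − 25·(k₂')³ + 32·k₂·k₂'·k₂'' − 8·k₂²·k₂''' = 0 and 16·k₁²·k₂² + 16·k₂⁴ − 17·(k₂')² + 12·k₂·k₂'' = 0. -/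
theorem aux_hasDeriv {I : Set ℝ} (hI : IsOpen I) {g : ℝ → ℝ}
    (hg : ContDiffOn ℝ (⊤ : ℕ∞) g I) {s : ℝ} (hs : s ∈ I) : HasDerivAt g (deriv g s) s :=
  ((hg.contDiffAt (hI.mem_nhds hs)).differentiableAt (by simp)).hasDerivAt

theorem aux_smooth {I : Set ℝ} (hI : IsOpen I) {g : ℝ → ℝ}
    (hg : ContDiffOn ℝ (⊤ : ℕ∞) g I) : ContDiffOn ℝ (⊤ : ℕ∞) (deriv g) I :=
  ((contDiffOn_infty_iff_deriv_of_isOpen hI).1 hg).2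

theorem aux_zero {I : Set ℝ} (hI : IsOpen I) {g : ℝ → ℝ} {a s c : ℝ} (hs : s ∈ I)
    (h : ∀ t ∈ I, g t = c) (hg : HasDerivAt g a s) : a = 0 := by
  have h1 : g =ᶠ[nhds s] fun _ => c := by
    filter_upwards [hI.mem_nhds hs] with t ht using h t ht
  exact hg.unique ((hasDerivAt_const s c).congr_of_eventuallyEq h1)

/-- consequences of equation (iii) at a point -/
theorem aux_main {I : Set ℝ} (hI : IsOpen I) (k₁ : ℝ) {k f : ℝ → ℝ}
    (hk : ContDiffOn ℝ (⊤ : ℕ∞) k I) (hkp : ∀ s ∈ I, 0 < k s)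
    (hf : ContDiffOn ℝ (⊤ : ℕ∞) f I) 
    (h3 : ∀ s ∈ I, deriv k s * f s + 4 * k s * deriv f s = 0) {s : ℝ} (hs : s ∈ I) :
    (-4 * k₁ ^ 2 * f s * deriv f s + f s * deriv (deriv (deriv f)) s
        + deriv f s * deriv (deriv f) s) * (32 * k s ^ 3) =
      f s ^ 2 * (32 * k₁ ^ 2 * k s ^ 2 * deriv k s - 25 * deriv k s ^ 3
          + 32 * k s * deriv k s * deriv (deriv k) s
          - 8 * k s ^ 2 * deriv (deriv (deriv k)) s) ∧
    (-k₁ ^ 2 * f s ^ 2 - k s ^ 2 * f s ^ 2 + 3 * f s * deriv (deriv f) s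
        + 2 * deriv f s ^ 2) * (16 * k s ^ 2) =
      - f s ^ 2 * (16 * k₁ ^ 2 * k s ^ 2 + 16 * k s ^ 4 - 17 * deriv k s ^ 2
          + 12 * k s * deriv (deriv k) s) := by
  have hk' := aux_smooth hI hk
  have hk'' := aux_smooth hI hk'
  have hf' := aux_smooth hI hf
  have hf'' := aux_smooth hI hf'
  have h4 : ∀ t ∈ I, deriv (deriv k) t * f t + 5 * (deriv k t * deriv f t)
      + 4 * (k t * deriv (deriv f) t) = 0 := by
    intro t ht
    have := aux_zero hI ht h3 (((aux_hasDeriv hI hk' ht).mul (aux_hasDeriv hI hf ht)).add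
      (((aux_hasDeriv hI hk ht).const_mul 4).mul (aux_hasDeriv hI hf' ht)))
    linear_combination this
  have h5 := aux_zero hI hs h4
    ((((aux_hasDeriv hI hk'' hs).mul (aux_hasDeriv hI hf hs)).add
      (((aux_hasDeriv hI hk' hs).mul (aux_hasDeriv hI hf' hs)).const_mul 5)).add
      (((aux_hasDeriv hI hk hs).mul (aux_hasDeriv hI hf'' hs)).const_mul 4))
  have h3 := h3 s hs
  have h4 := h4 s hs
  have hk0 := (hkp s hs).ne'
  generalize deriv (deriv (deriv f)) s = f3 at *
  generalize deriv (deriv (deriv k)) s = k3 at *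
  generalize deriv (deriv f) s = f2 at *
  generalize deriv (deriv k) s = k2 at *
  generalize deriv f s = f1 at *
  generalize deriv k s = m1 at *
  generalize k s = m at *
  generalize f s = f0 at *
  have e1 : f1 = -(m1 * f0) / (4 * m) := by
    field_simp; linear_combination h3
  have e2 : f2 = -(k2 * f0 + 5 * (m1 * f1)) / (4 * m) := by
    field_simp; linear_combination h4
  have e3 : f3 = -(k3 * f0 + 6 * (k2 * f1) + 9 * (m1 * f2)) / (4 * m) := by
    field_simp; linear_combination h5
  rw [e3, e2, e1]
  constructor
  · field_simp; ring
  · field_simp; ring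

/-- Case IV in Euclidean space: for `k₁ = const > 0`, `k₂` smooth positive nonconstant,
the bi-f-harmonic system holds iff `f = c k₂^(-1/4)`, `k₃ = 0`, and `k₁, k₂` satisfy the
two displayed curvature ODEs. -/
theorem bi_f_harmonic_euclidean_case_IV
    (I : Set ℝ) (hIopen : IsOpen I) (hIne : I.Nonempty) (hIconn : I.OrdConnected)
    (k₁ : ℝ) (hk₁ : 0 < k₁)
    (k₂ : ℝ → ℝ) (hk₂ : ContDiffOn ℝ (⊤ : ℕ∞) k₂ I) (hk₂pos : ∀ s ∈ I, 0 < k₂ s)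
    (hk₂nc : ¬ ∃ a : ℝ, ∀ s ∈ I, k₂ s = a)
    (k₃ : ℝ → ℝ)
    (f : ℝ → ℝ) (hf : ContDiffOn ℝ (⊤ : ℕ∞) f I) (hfpos : ∀ s ∈ I, 0 < f s) :
    ((∀ s ∈ I, -4 * k₁ ^ 2 * f s * deriv f s + f s * deriv (deriv (deriv f)) s
        + deriv f s * deriv (deriv f) s = 0) ∧
     (∀ s ∈ I, -k₁ ^ 2 * f s ^ 2 - k₂ s ^ 2 * f s ^ 2 + 3 * f s * deriv (deriv f) s
        + 2 * deriv f s ^ 2 = 0) ∧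
     (∀ s ∈ I, deriv k₂ s * f s + 4 * k₂ s * deriv f s = 0) ∧
     (∀ s ∈ I, k₂ s * k₃ s = 0)) ↔
      ((∃ c : ℝ, 0 < c ∧ ∀ s ∈ I, f s = c * k₂ s ^ (-(1 / 4 : ℝ))) ∧
       (∀ s ∈ I, k₃ s = 0) ∧
       (∀ s ∈ I, 32 * k₁ ^ 2 * k₂ s ^ 2 * deriv k₂ s - 25 * deriv k₂ s ^ 3
          + 32 * k₂ s * deriv k₂ s * deriv (deriv k₂) s
          - 8 * k₂ s ^ 2 * deriv (deriv (deriv k₂)) s = 0) ∧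
       (∀ s ∈ I, 16 * k₁ ^ 2 * k₂ s ^ 2 + 16 * k₂ s ^ 4 - 17 * deriv k₂ s ^ 2
          + 12 * k₂ s * deriv (deriv k₂) s = 0)) := by
  have D3 : ∀ s ∈ I, HasDerivAt (fun t => f t ^ 4 * k₂ t)
      (f s ^ 3 * (deriv k₂ s * f s + 4 * k₂ s * deriv f s)) s := by
    intro s hs
    have := ((aux_hasDeriv hIopen hf hs).pow 4).mul (aux_hasDeriv hIopen hk₂ hs)
    refine HasDerivAt.congr_deriv (f := fun t => f t ^ 4 * k₂ t) this ?_
    simp only [Pi.pow_apply]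
    push_cast
    ring
  constructor
  · rintro ⟨h1, h2, h3, h4⟩
    refine ⟨?_, ?_, ?_, ?_⟩
    · obtain ⟨s0, hs0⟩ := hIne
      have hpos : 0 < f s0 ^ 4 * k₂ s0 := mul_pos (pow_pos (hfpos _ hs0) 4) (hk₂pos _ hs0)
      have hc : ∀ s ∈ I, f s ^ 4 * k₂ s = f s0 ^ 4 * k₂ s0 := by
        intro s hs
        refine hIopen.is_const_of_deriv_eq_zero (f := fun t => f t ^ 4 * k₂ t)
          hIconn.isPreconnected
          (fun t ht => (D3 t ht).differentiableAt.differentiableWithinAt) ?_ hs hs0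
        intro t ht
        rw [(D3 t ht).deriv, h3 t ht]; simp
      refine ⟨(f s0 ^ 4 * k₂ s0) ^ (1 / 4 : ℝ), Real.rpow_pos_of_pos hpos _, ?_⟩
      intro s hs
      have hk := hk₂pos s hs
      have hf0 := hfpos s hs
      rw [← hc s hs, Real.mul_rpow (by positivity) hk.le, mul_assoc, ← Real.rpow_add hk,
        ← Real.rpow_natCast, ← Real.rpow_mul hf0.le]
      norm_num
    · intro s hs
      exact (mul_eq_zero.1 (h4 s hs)).resolve_left (hk₂pos s hs).ne'
    · intro s hs
      have := (aux_main hIopen k₁ hk₂ hk₂pos hf h3 hs).1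
      rw [h1 s hs, zero_mul] at this
      exact (mul_eq_zero.1 this.symm).resolve_left (pow_ne_zero 2 (hfpos s hs).ne')
    · intro s hs
      have := (aux_main hIopen k₁ hk₂ hk₂pos hf h3 hs).2
      rw [h2 s hs, zero_mul] at this
      exact (mul_eq_zero.1 this.symm).resolve_left
        (neg_ne_zero.2 (pow_ne_zero 2 (hfpos s hs).ne'))
  · rintro ⟨⟨c, hc, hfc⟩, h4, h1, h2⟩
    have h3 : ∀ s ∈ I, deriv k₂ s * f s + 4 * k₂ s * deriv f s = 0 := by
      have hcc : ∀ t ∈ I, (fun t => f t ^ 4 * k₂ t) t = c ^ 4 := by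
        intro t ht
        have hk := hk₂pos t ht
        have e : (k₂ t ^ (-(1 / 4 : ℝ))) ^ 4 = (k₂ t)⁻¹ := by
          rw [← Real.rpow_natCast, ← Real.rpow_mul hk.le, ← Real.rpow_neg_one]
          norm_num
        simp only [hfc t ht]
        rw [mul_pow, e, mul_assoc, inv_mul_cancel₀ hk.ne', mul_one]
      intro s hs
      exact (mul_eq_zero.1 (aux_zero hIopen hs hcc (D3 s hs))).resolve_left
        (pow_ne_zero 3 (hfpos s hs).ne')
    refine ⟨?_, ?_, h3, ?_⟩
    · intro s hs
      have := (aux_main hIopen k₁ hk₂ hk₂pos hf h3 hs).1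
      rw [h1 s hs, mul_zero] at this
      have hk := hk₂pos s hs
      exact (mul_eq_zero.1 this).resolve_right (by positivity)
    · intro s hs
      have := (aux_main hIopen k₁ hk₂ hk₂pos hf h3 hs).2
      rw [h2 s hs, mul_zero] at this
      have hk := hk₂pos s hs
      exact (mul_eq_zero.1 this).resolve_right (by positivity)
    · intro s hs
      rw [h4 s hs, mul_zero]
end

section
/- Let I be a nonempty open real interval, let k₁, k₂ : ℝ → ℝ be smooth and strictly positive on I, and let f : ℝ → ℝ be smooth and strictly positive on I. Then 2·k₁'·k₂·f + k₁·k₂'·f + 4·k₁·k₂·f' = 0 at every point of I if and only if there exists a constant c > 0 such that f(s) = c·k₁(s)^(−1/2)·k₂(s)^(−1/4) for all s ∈ I. -/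
/-- The ODE `2 k₁' k₂ f + k₁ k₂' f + 4 k₁ k₂ f' = 0` on a nonempty open interval, with
`k₁, k₂, f` smooth and positive, holds iff `f = c k₁^(-1/2) k₂^(-1/4)` for some `c > 0`. -/
theorem f_eq_k1_rpow_neg_half_mul_k2_rpow_neg_quarter
    (I : Set ℝ) (hIopen : IsOpen I) (hIne : I.Nonempty) (hIconn : I.OrdConnected)
    (k₁ k₂ : ℝ → ℝ) (hk₁ : ContDiffOn ℝ (⊤ : ℕ∞) k₁ I) (hk₂ : ContDiffOn ℝ (⊤ : ℕ∞) k₂ I)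
    (hk₁pos : ∀ s ∈ I, 0 < k₁ s) (hk₂pos : ∀ s ∈ I, 0 < k₂ s)
    (f : ℝ → ℝ) (hf : ContDiffOn ℝ (⊤ : ℕ∞) f I) (hfpos : ∀ s ∈ I, 0 < f s) :
    (∀ s ∈ I, 2 * deriv k₁ s * k₂ s * f s + k₁ s * deriv k₂ s * f s
        + 4 * k₁ s * k₂ s * deriv f s = 0) ↔
      ∃ c : ℝ, 0 < c ∧
        ∀ s ∈ I, f s = c * k₁ s ^ (-(1 / 2 : ℝ)) * k₂ s ^ (-(1 / 4 : ℝ)) := by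
  have hd : ∀ g : ℝ → ℝ, ContDiffOn ℝ (⊤ : ℕ∞) g I → ∀ s ∈ I, HasDerivAt g (deriv g s) s := by
    intro g hg s hs
    exact ((hg.differentiableOn (by simp)).differentiableAt (hIopen.mem_nhds hs)).hasDerivAt
  have hG : ∀ s ∈ I, HasDerivAt
      (fun t => 2 * Real.log (k₁ t) + Real.log (k₂ t) + 4 * Real.log (f t))
      (2 * (deriv k₁ s / k₁ s) + deriv k₂ s / k₂ s + 4 * (deriv f s / f s)) s := by
    intro s hs
    exact ((((hd k₁ hk₁ s hs).log (hk₁pos s hs).ne').const_mul 2).add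
      ((hd k₂ hk₂ s hs).log (hk₂pos s hs).ne')).add
      (((hd f hf s hs).log (hfpos s hs).ne').const_mul 4)
  have hE : ∀ s ∈ I, 2 * deriv k₁ s * k₂ s * f s + k₁ s * deriv k₂ s * f s
        + 4 * k₁ s * k₂ s * deriv f s =
      (2 * (deriv k₁ s / k₁ s) + deriv k₂ s / k₂ s + 4 * (deriv f s / f s))
        * (k₁ s * k₂ s * f s) := by
    intro s hs
    have h1 := (hk₁pos s hs).ne'
    have h2 := (hk₂pos s hs).ne'
    have h3 := (hfpos s hs).ne'
    field_simp
  constructor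
  · intro h
    obtain ⟨a, ha⟩ := hIne
    refine ⟨Real.exp ((2 * Real.log (k₁ a) + Real.log (k₂ a) + 4 * Real.log (f a)) / 4),
      Real.exp_pos _, ?_⟩
    intro s hs
    have hc := hIopen.is_const_of_deriv_eq_zero hIconn.isPreconnected
      (fun t ht => (hG t ht).differentiableAt.differentiableWithinAt)
      (fun t ht => by
        have h0 := h t ht
        rw [hE t ht] at h0
        rw [(hG t ht).deriv]
        exact (mul_eq_zero.mp h0).resolve_right
          (mul_pos (mul_pos (hk₁pos t ht) (hk₂pos t ht)) (hfpos t ht)).ne') ha hs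
    rw [hc, Real.rpow_def_of_pos (hk₁pos s hs), Real.rpow_def_of_pos (hk₂pos s hs),
      ← Real.exp_add, ← Real.exp_add]
    nth_rewrite 1 [← Real.exp_log (hfpos s hs)]
    congr 1
    ring
  · rintro ⟨c, hc, h⟩ s hs
    have hev : (fun t => 2 * Real.log (k₁ t) + Real.log (k₂ t) + 4 * Real.log (f t))
        =ᶠ[nhds s] fun _ => 4 * Real.log c := by
      filter_upwards [hIopen.mem_nhds hs] with t ht
      have p1 := hk₁pos t ht
      have p2 := hk₂pos t ht
      rw [h t ht, Real.log_mul (by positivity) (by positivity),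
        Real.log_mul (by positivity) (by positivity), Real.log_rpow p1, Real.log_rpow p2]
      ring
    have h0 := (hG s hs).unique ((hasDerivAt_const s (4 * Real.log c)).congr_of_eventuallyEq hev)
    rw [hE s hs, h0, zero_mul]
end

section
/- Let I be a nonempty open real interval, let k₁, k₂ : ℝ → ℝ be smooth, strictly positive and nonconstant on I, let k₃ : ℝ → ℝ be a function on I, and let f : ℝ → ℝ be smooth and strictly positive on I. Then the system on I: (i) −3·k₁·k₁'·f² − 4·k₁²·f·f' + f·f''' + f'·f'' = 0, (ii) −k₁³·f² − k₁·k₂²·f² + k₁''·f² + 4·k₁'·f·f' + 3·k₁·f·f'' + 2·k₁·(f')² = 0, (iii) 2·k₁'·k₂·f + k₁·k₂'·f + 4·k₁·k₂·f' = 0, (iv) k₁·k₂·k₃ = 0, holds if and only if there exists c > 0 with f = c·k₁^(−1/2)·k₂^(−1/4) on I, k₃ = 0 on I, and equations (i) and (ii) hold on I. -/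
/-- Case VII in Euclidean space: for `k₁, k₂` smooth positive nonconstant, the
bi-f-harmonic system holds iff `f = c k₁^(-1/2) k₂^(-1/4)`, `k₃ = 0`, and equations
(i), (ii) hold. -/
theorem bi_f_harmonic_euclidean_case_VII
    (I : Set ℝ) (hIopen : IsOpen I) (hIne : I.Nonempty) (hIconn : I.OrdConnected)
    (k₁ k₂ : ℝ → ℝ) (hk₁ : ContDiffOn ℝ (⊤ : ℕ∞) k₁ I) (hk₂ : ContDiffOn ℝ (⊤ : ℕ∞) k₂ I)
    (hk₁pos : ∀ s ∈ I, 0 < k₁ s) (hk₂pos : ∀ s ∈ I, 0 < k₂ s)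
    (hk₁nc : ¬ ∃ a : ℝ, ∀ s ∈ I, k₁ s = a) (hk₂nc : ¬ ∃ a : ℝ, ∀ s ∈ I, k₂ s = a)
    (k₃ : ℝ → ℝ)
    (f : ℝ → ℝ) (hf : ContDiffOn ℝ (⊤ : ℕ∞) f I) (hfpos : ∀ s ∈ I, 0 < f s) :
    ((∀ s ∈ I, -3 * k₁ s * deriv k₁ s * f s ^ 2 - 4 * k₁ s ^ 2 * f s * deriv f s
        + f s * deriv (deriv (deriv f)) s + deriv f s * deriv (deriv f) s = 0) ∧
     (∀ s ∈ I, -k₁ s ^ 3 * f s ^ 2 - k₁ s * k₂ s ^ 2 * f s ^ 2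
        + deriv (deriv k₁) s * f s ^ 2 + 4 * deriv k₁ s * f s * deriv f s
        + 3 * k₁ s * f s * deriv (deriv f) s + 2 * k₁ s * deriv f s ^ 2 = 0) ∧
     (∀ s ∈ I, 2 * deriv k₁ s * k₂ s * f s + k₁ s * deriv k₂ s * f s
        + 4 * k₁ s * k₂ s * deriv f s = 0) ∧
     (∀ s ∈ I, k₁ s * k₂ s * k₃ s = 0)) ↔
      ((∃ c : ℝ, 0 < c ∧
          ∀ s ∈ I, f s = c * k₁ s ^ (-(1 / 2 : ℝ)) * k₂ s ^ (-(1 / 4 : ℝ))) ∧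
       (∀ s ∈ I, k₃ s = 0) ∧
       (∀ s ∈ I, -3 * k₁ s * deriv k₁ s * f s ^ 2 - 4 * k₁ s ^ 2 * f s * deriv f s
          + f s * deriv (deriv (deriv f)) s + deriv f s * deriv (deriv f) s = 0) ∧
       (∀ s ∈ I, -k₁ s ^ 3 * f s ^ 2 - k₁ s * k₂ s ^ 2 * f s ^ 2
          + deriv (deriv k₁) s * f s ^ 2 + 4 * deriv k₁ s * f s * deriv f s
          + 3 * k₁ s * f s * deriv (deriv f) s + 2 * k₁ s * deriv f s ^ 2 = 0)) := by
  have hd : ∀ g : ℝ → ℝ, ContDiffOn ℝ (⊤ : ℕ∞) g I → ∀ s ∈ I, HasDerivAt g (deriv g s) s := by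
    intro g hg s hs
    exact ((hg.differentiableOn (by simp)).differentiableAt (hIopen.mem_nhds hs)).hasDerivAt
  have hG : ∀ s ∈ I, HasDerivAt
      (fun t => 4 * Real.log (f t) + 2 * Real.log (k₁ t) + Real.log (k₂ t))
      (4 * (deriv f s / f s) + 2 * (deriv k₁ s / k₁ s) + deriv k₂ s / k₂ s) s := by
    intro s hs
    exact ((((hd f hf s hs).log (hfpos s hs).ne').const_mul 4).add
      (((hd k₁ hk₁ s hs).log (hk₁pos s hs).ne').const_mul 2)).add
      ((hd k₂ hk₂ s hs).log (hk₂pos s hs).ne')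
  have hiff : ∀ s ∈ I, (4 * (deriv f s / f s) + 2 * (deriv k₁ s / k₁ s) + deriv k₂ s / k₂ s) *
      (f s * k₁ s * k₂ s) = 2 * deriv k₁ s * k₂ s * f s + k₁ s * deriv k₂ s * f s
        + 4 * k₁ s * k₂ s * deriv f s := by
    intro s hs
    have h1 := (hfpos s hs).ne'
    have h2 := (hk₁pos s hs).ne'
    have h3 := (hk₂pos s hs).ne'
    field_simp
    ring
  have hne : ∀ s ∈ I, f s * k₁ s * k₂ s ≠ 0 := fun s hs =>
    (mul_pos (mul_pos (hfpos s hs) (hk₁pos s hs)) (hk₂pos s hs)).ne'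
  constructor
  · rintro ⟨h1, h2, h3, h4⟩
    refine ⟨?_, ?_, h1, h2⟩
    · obtain ⟨a, ha⟩ := hIopen.exists_is_const_of_deriv_eq_zero (𝕜 := ℝ)
        (f := fun t => 4 * Real.log (f t) + 2 * Real.log (k₁ t) + Real.log (k₂ t))
        hIconn.isPreconnected
        (fun s hs => (hG s hs).differentiableAt.differentiableWithinAt)
        (fun s hs => by
          rw [(hG s hs).deriv]
          have := hiff s hs
          rw [h3 s hs] at this
          exact (mul_eq_zero.mp this).resolve_right (hne s hs))
      refine ⟨Real.exp (a / 4), Real.exp_pos _, fun s hs => ?_⟩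
      have h := ha s hs
      rw [Real.rpow_def_of_pos (hk₁pos s hs), Real.rpow_def_of_pos (hk₂pos s hs),
        ← Real.exp_add, ← Real.exp_add]
      rw [← Real.exp_log (hfpos s hs)]
      congr 1
      linarith
    · intro s hs
      exact (mul_eq_zero.mp (h4 s hs)).resolve_left
        (mul_pos (hk₁pos s hs) (hk₂pos s hs)).ne'
  · rintro ⟨⟨c, hc, h⟩, h3, h1, h2⟩
    refine ⟨h1, h2, fun s hs => ?_, fun s hs => by rw [h3 s hs, mul_zero]⟩
    rw [← hiff s hs]
    have hev : (fun t => 4 * Real.log (f t) + 2 * Real.log (k₁ t) + Real.log (k₂ t))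
        =ᶠ[nhds s] fun _ => 4 * Real.log c := by
      filter_upwards [hIopen.mem_nhds hs] with t ht
      have p1 := Real.rpow_pos_of_pos (hk₁pos t ht) (-(1 / 2 : ℝ))
      have p2 := Real.rpow_pos_of_pos (hk₂pos t ht) (-(1 / 4 : ℝ))
      rw [h t ht, Real.log_mul (mul_pos hc p1).ne' p2.ne', Real.log_mul hc.ne' p1.ne',
        Real.log_rpow (hk₁pos t ht), Real.log_rpow (hk₂pos t ht)]
      ring
    have := (hG s hs).unique ((hasDerivAt_const s _).congr_of_eventuallyEq hev)
    rw [this, zero_mul]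
end
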